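/- Let R : ℝ → ℝ be twice differentiable, let R_B > 0 and Re > 0. Define the steady-domain velocity field u^f(x,t) = R'(t) R_B² · x/‖x‖³ and the pressure p^f(x,t) = R''(t) R_B² / ‖x‖ for x ∈ ℝ³ ∖ {0}. Then for every x ≠ 0 and every t, the pair (u^f, p^f) satisfies the unsteady incompressible Stokes equations: ∂u^f/∂t (x,t) + ∇_x p^f(x,t) = (1/Re) Δ_x u^f(x,t) and div_x u^f(x,t) = 0; moreover for ‖x‖ = R_B one has u^f(x,t) = R'(t) · x/‖x‖. -/

import Mathlib

/-!
On a `d`-dimensional Euclidean space the power field `‖x‖ ^ p • x` has divergence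
`(p + d) * ‖x‖ ^ p` and Laplacian `p * (p + d) * ‖x‖ ^ (p - 2) • x`, so both vanish at the
point-source exponent `p = -d`. In dimension three the source field is `x / ‖x‖ ^ 3 = -∇(1 / ‖x‖)`,
so the viscous term is zero and a pressure proportional to `1 / ‖x‖` balances the acceleration.
-/

/-- Steady-computational-bubble velocity field: `u^f(t,x) = R'(t) R_B² · x/‖x‖³`,
where the bubble oscillation with radius law `R(t)` is imposed on the fixed
sphere of radius `R_B`. -/
noncomputable def steadyVel (R : ℝ → ℝ) (RB t : ℝ)
    (x : EuclideanSpace ℝ (Fin 3)) : EuclideanSpace ℝ (Fin 3) :=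
  (deriv R t * RB ^ 2 / ‖x‖ ^ 3) • x

/-- Steady-computational-bubble pressure field: `p^f(t,x) = R''(t) R_B² / ‖x‖`. -/
noncomputable def steadyPres (R : ℝ → ℝ) (RB t : ℝ)
    (x : EuclideanSpace ℝ (Fin 3)) : ℝ :=
  deriv (deriv R) t * RB ^ 2 / ‖x‖

open InnerProductSpace Laplacian Module

section Calculus

variable {E F : Type*} [NormedAddCommGroup E] [InnerProductSpace ℝ E]
  [NormedAddCommGroup F] [NormedSpace ℝ F]

theorem laplacian_eq_sum_fderiv_fderiv_apply [FiniteDimensional ℝ E] {ι : Type*} [Fintype ι]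
    (b : OrthonormalBasis ι ℝ E) {f : E → F} {x : E} (hf : ContDiffAt ℝ 2 f x) :
    Δ f x = ∑ j, fderiv ℝ (fun y => fderiv ℝ f y (b j)) x (b j) := by
  have hf' : DifferentiableAt ℝ (fderiv ℝ f) x :=
    (hf.fderiv_right (m := 1) (by norm_num)).differentiableAt one_ne_zero
  simp only [laplacian_eq_iteratedFDeriv_orthonormalBasis f b, iteratedFDeriv_two_apply]
  refine Finset.sum_congr rfl fun j _ => ?_
  simp [fderiv_clm_apply hf' (differentiableAt_const (b j))]

theorem laplacian_eq_sum_fderiv_fderiv_single {ι : Type*} [Fintype ι] [DecidableEq ι]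
    {f : EuclideanSpace ℝ ι → F} {x : EuclideanSpace ℝ ι} (hf : ContDiffAt ℝ 2 f x) :
    Δ f x = ∑ j, fderiv ℝ (fun y => fderiv ℝ f y (EuclideanSpace.single j 1)) x
      (EuclideanSpace.single j 1) := by
  simpa only [EuclideanSpace.basisFun_apply] using
    laplacian_eq_sum_fderiv_fderiv_apply (EuclideanSpace.basisFun ι ℝ) hf

/-- The divergence of a vector field, encoded without coordinates as the trace of its derivative. -/
noncomputable def divergence (f : E → E) (x : E) : ℝ :=
  LinearMap.trace ℝ E (fderiv ℝ f x)

theorem divergence_eq_sum_fderiv_coord {ι : Type*} [Fintype ι] [DecidableEq ι]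
    {f : EuclideanSpace ℝ ι → EuclideanSpace ℝ ι} {x : EuclideanSpace ℝ ι}
    (hf : DifferentiableAt ℝ f x) :
    divergence f x = ∑ i, fderiv ℝ (fun y => f y i) x (EuclideanSpace.single i 1) := by
  have fderiv_coord (i : ι) :
      fderiv ℝ (fun y => f y i) x = (EuclideanSpace.proj i).comp (fderiv ℝ f x) :=
    ((EuclideanSpace.proj (𝕜 := ℝ) i).hasFDerivAt.comp x hf.hasFDerivAt).fderiv
  simp [divergence, LinearMap.trace_eq_sum_inner _ (EuclideanSpace.basisFun ι ℝ),
    EuclideanSpace.inner_single_left, fderiv_coord]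

theorem hasFDerivAt_norm_rpow_of_ne_zero {x : E} (hx : x ≠ 0) (p : ℝ) :
    HasFDerivAt (fun y : E => ‖y‖ ^ p) ((p * ‖x‖ ^ (p - 2)) • innerSL ℝ x) x := by
  -- `‖y‖ ^ p = (‖y‖ ^ 2) ^ (p / 2)`, and the squared norm is smooth.
  have h := (hasStrictFDerivAt_norm_sq x).hasFDerivAt.rpow_const (p := p / 2) (by simp [hx])
  simp_rw [← Real.rpow_natCast_mul (norm_nonneg _), ← Nat.cast_smul_eq_nsmul ℝ, smul_smul] at h
  convert! h using 2 <;> ring_nf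

end Calculus

theorem rpow_sub_two_mul_sq {r : ℝ} (hr : r ≠ 0) (p : ℝ) : r ^ (p - 2) * r ^ 2 = r ^ p := by
  rw [← Real.rpow_add_natCast hr]
  norm_num

section PowerField

variable {E F : Type*} [NormedAddCommGroup E] [InnerProductSpace ℝ E]
  [NormedAddCommGroup F] [NormedSpace ℝ F] {x : E}

theorem contDiffAt_norm_rpow_smul_clm {n : WithTop ℕ∞} (hx : x ≠ 0) (p : ℝ) (L : E →L[ℝ] F) :
    ContDiffAt ℝ n (fun y => ‖y‖ ^ p • L y) x :=
  ((contDiffAt_norm ℝ hx).rpow_const_of_ne (norm_ne_zero_iff.mpr hx)).smul L.contDiff.contDiffAt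

theorem hasFDerivAt_norm_rpow_smul_clm (hx : x ≠ 0) (p : ℝ) (L : E →L[ℝ] F) :
    HasFDerivAt (fun y => ‖y‖ ^ p • L y)
      (‖x‖ ^ p • L + (p * ‖x‖ ^ (p - 2)) • (innerSL ℝ x).smulRight (L x)) x := by
  convert! (hasFDerivAt_norm_rpow_of_ne_zero hx p).smul L.hasFDerivAt using 1
  ext v
  simp [mul_smul]

theorem divergence_norm_rpow_smul_clm [FiniteDimensional ℝ E] (hx : x ≠ 0) (p : ℝ)
    (L : E →L[ℝ] E) :
    divergence (fun y => ‖y‖ ^ p • L y) x =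
      ‖x‖ ^ p * LinearMap.trace ℝ E L + p * ‖x‖ ^ (p - 2) * inner ℝ x (L x) := by
  simp [divergence, (hasFDerivAt_norm_rpow_smul_clm hx p L).fderiv]

theorem divergence_norm_rpow_smul_const_smul [FiniteDimensional ℝ E] (hx : x ≠ 0) (p c : ℝ) :
    divergence (fun y => ‖y‖ ^ p • c • y) x = (p + finrank ℝ E) * ‖x‖ ^ p * c :=
  calc divergence (fun y => ‖y‖ ^ p • c • y) x
      = ‖x‖ ^ p * (c * finrank ℝ E) + p * ‖x‖ ^ (p - 2) * (c * ‖x‖ ^ 2) := by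
        simpa [real_inner_smul_right] using
          divergence_norm_rpow_smul_clm hx p (c • ContinuousLinearMap.id ℝ E)
    _ = (p + finrank ℝ E) * ‖x‖ ^ p * c := by
        linear_combination p * c * rpow_sub_two_mul_sq (norm_ne_zero_iff.mpr hx) p

theorem fderiv_fderiv_norm_rpow_smul_clm_apply (hx : x ≠ 0) (p : ℝ) (L : E →L[ℝ] F) (v : E) :
    fderiv ℝ (fun y => fderiv ℝ (fun z => ‖z‖ ^ p • L z) y v) x v =
      (2 * p * ‖x‖ ^ (p - 2) * inner ℝ x v) • L v +
        (p * ‖x‖ ^ (p - 2) * ‖v‖ ^ 2 +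
          p * (p - 2) * ‖x‖ ^ (p - 4) * inner ℝ x v ^ 2) • L x := by
  have first_derivative : (fun y => fderiv ℝ (fun z => ‖z‖ ^ p • L z) y v) =ᶠ[nhds x]
      fun y => ‖y‖ ^ p • L v + (p * ‖y‖ ^ (p - 2) * inner ℝ v y) • L y := by
    filter_upwards [isOpen_ne.mem_nhds hx] with y hy
    simp [(hasFDerivAt_norm_rpow_smul_clm hy p L).fderiv, smul_smul, real_inner_comm]
  have second_derivative :=
    ((hasFDerivAt_norm_rpow_of_ne_zero hx p).smul_const (L v)).add
      ((((hasFDerivAt_norm_rpow_of_ne_zero hx (p - 2)).const_mul p).mul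
        (innerSL ℝ v).hasFDerivAt).smul L.hasFDerivAt)
  rw [first_derivative.fderiv_eq]
  refine (congrArg (fun D => D v) second_derivative.fderiv).trans ?_
  simp only [coe_innerSL_apply, Pi.mul_apply, add_apply, smul_apply, smul_eq_mul,
    ContinuousLinearMap.smulRight_apply, real_inner_self_eq_norm_sq, real_inner_comm,
    show p - 2 - 2 = p - 4 by ring]
  module

theorem laplacian_norm_rpow_smul_clm [FiniteDimensional ℝ E] (hx : x ≠ 0) (p : ℝ) (L : E →L[ℝ] F) :
    Δ (fun y => ‖y‖ ^ p • L y) x = (p * (p + finrank ℝ E) * ‖x‖ ^ (p - 2)) • L x := by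
  let b := stdOrthonormalBasis ℝ E
  have sum_inner_smul : ∑ j, inner ℝ x (b j) • L (b j) = L x := by
    simpa only [map_sum, map_smul, real_inner_comm] using congrArg L (b.sum_repr' x)
  have norm_rpow_mul_norm_sq : ‖x‖ ^ (p - 4) * ‖x‖ ^ 2 = ‖x‖ ^ (p - 2) := by
    rw [← rpow_sub_two_mul_sq (norm_ne_zero_iff.mpr hx) (p - 2)]
    ring_nf
  calc Δ (fun y => ‖y‖ ^ p • L y) x
      = (2 * p * ‖x‖ ^ (p - 2)) • ∑ j, inner ℝ x (b j) • L (b j) +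
          (p * ‖x‖ ^ (p - 2) * ∑ j, ‖b j‖ ^ 2 +
            p * (p - 2) * ‖x‖ ^ (p - 4) * ∑ j, inner ℝ x (b j) ^ 2) • L x := by
        rw [laplacian_eq_sum_fderiv_fderiv_apply b (contDiffAt_norm_rpow_smul_clm hx p L)]
        simp only [fderiv_fderiv_norm_rpow_smul_clm_apply hx, Finset.sum_add_distrib,
          ← Finset.sum_smul, Finset.mul_sum, Finset.smul_sum, smul_smul]
    _ = (2 * p * ‖x‖ ^ (p - 2) + (p * ‖x‖ ^ (p - 2) * finrank ℝ E +
          p * (p - 2) * ‖x‖ ^ (p - 4) * ‖x‖ ^ 2)) • L x := by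
        simp [sum_inner_smul, b.sum_sq_inner_left, add_smul]
    _ = (p * (p + finrank ℝ E) * ‖x‖ ^ (p - 2)) • L x := by
        congr 1
        linear_combination p * (p - 2) * norm_rpow_mul_norm_sq

end PowerField

section SteadyBubble

variable {R : ℝ → ℝ} {RB t : ℝ} {x : EuclideanSpace ℝ (Fin 3)}

theorem steadyVel_eq_norm_rpow_smul :
    steadyVel R RB t x = ‖x‖ ^ (-3 : ℝ) • (deriv R t * RB ^ 2) • x := by
  simp [steadyVel, smul_smul, div_eq_inv_mul]

theorem steadyVel_of_norm_eq (hx : ‖x‖ = RB) : steadyVel R RB t x = (deriv R t / ‖x‖) • x := by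
  subst hx
  rw [steadyVel]
  congr 1
  field_simp

theorem contDiffAt_steadyVel {n : WithTop ℕ∞} (hx : x ≠ 0) :
    ContDiffAt ℝ n (steadyVel R RB t) x :=
  (contDiffAt_norm_rpow_smul_clm hx (-3)
    ((deriv R t * RB ^ 2) • ContinuousLinearMap.id ℝ _)).congr_of_eventuallyEq
    (.of_forall fun _ => steadyVel_eq_norm_rpow_smul)

theorem divergence_steadyVel (hx : x ≠ 0) : divergence (steadyVel R RB t) x = 0 := by
  have h := divergence_norm_rpow_smul_const_smul hx (-3) (deriv R t * RB ^ 2)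
  simp_rw [← steadyVel_eq_norm_rpow_smul] at h
  simpa using h

theorem laplacian_steadyVel_coord (hx : x ≠ 0) (i : Fin 3) :
    Δ (fun y => steadyVel R RB t y i) x = 0 := by
  have h := laplacian_norm_rpow_smul_clm hx (-3)
    ((deriv R t * RB ^ 2) • EuclideanSpace.proj (𝕜 := ℝ) i)
  simpa [steadyVel_eq_norm_rpow_smul] using h

theorem hasDerivAt_steadyVel_coord (hR' : DifferentiableAt ℝ (deriv R) t) (i : Fin 3) :
    HasDerivAt (fun s => steadyVel R RB s x i) (deriv (deriv R) t * RB ^ 2 / ‖x‖ ^ 3 * x i) t :=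
  ((hR'.hasDerivAt.mul_const _).div_const _).mul_const _

theorem hasFDerivAt_steadyPres (hx : x ≠ 0) :
    HasFDerivAt (steadyPres R RB t) (-(deriv (deriv R) t * RB ^ 2 / ‖x‖ ^ 3) • innerSL ℝ x) x := by
  have h := (hasFDerivAt_norm_rpow_of_ne_zero hx (-1)).const_mul (deriv (deriv R) t * RB ^ 2)
  convert! h using 1
  · ext y
    simp [steadyPres, Real.rpow_neg_one, div_eq_mul_inv]
  · norm_num [smul_smul, Real.rpow_neg, div_eq_mul_inv]

end SteadyBubble

/-- The pair `(u^f, p^f)` with `u^f(t,x) = R'(t)R_B²·x/‖x‖³` and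
`p^f(t,x) = R''(t)R_B²/‖x‖` solves the unsteady incompressible Stokes equations
on `ℝ³ ∖ {0}` (with `Δₓu^f = 0` componentwise and `divₓ u^f = 0`), and on the
fixed sphere `‖x‖ = R_B` it equals the prescribed surface velocity
`R'(t)·x/‖x‖`. -/
theorem steady_computational_bubble_stokes (R : ℝ → ℝ)
    (hR : Differentiable ℝ R) (hR' : Differentiable ℝ (deriv R))
    (RB Re : ℝ) (hRB : 0 < RB) (hRe : 0 < Re) (t : ℝ) :
    (∀ x : EuclideanSpace ℝ (Fin 3), x ≠ 0 →
      (∀ i : Fin 3,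
        deriv (fun s => steadyVel R RB s x i) t +
            fderiv ℝ (fun y => steadyPres R RB t y) x (EuclideanSpace.single i 1) =
          (1 / Re) *
            ∑ j : Fin 3,
              fderiv ℝ (fun y => fderiv ℝ (fun z => steadyVel R RB t z i) y
                (EuclideanSpace.single j 1)) x (EuclideanSpace.single j 1)) ∧
      (∑ i : Fin 3,
        fderiv ℝ (fun y => steadyVel R RB t y i) x (EuclideanSpace.single i 1) = 0)) ∧
    (∀ x : EuclideanSpace ℝ (Fin 3), ‖x‖ = RB →
      steadyVel R RB t x = (deriv R t / ‖x‖) • x) := by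
  refine ⟨fun x hx => ?stokes, fun x => steadyVel_of_norm_eq⟩
  have smooth_vel : ContDiffAt ℝ 2 (steadyVel R RB t) x := contDiffAt_steadyVel hx
  refine ⟨fun i => ?momentum, ?incompressibility⟩
  case momentum =>
    rw [← laplacian_eq_sum_fderiv_fderiv_single (contDiffAt_euclidean.mp smooth_vel i),
      laplacian_steadyVel_coord hx, (hasDerivAt_steadyVel_coord (hR' t) i).deriv,
      (hasFDerivAt_steadyPres hx).fderiv]
    simp [EuclideanSpace.inner_single_right]
  case incompressibility =>
    rw [← divergence_eq_sum_fderiv_coord (smooth_vel.differentiableAt two_ne_zero),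
      divergence_steadyVel hx]
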